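/- Fix x ∈ ℝ, and let F_n'(x) denote the derivative in x of F_n(x) = Φ(h_n)^{n} − (1 − Φ(h_n))^{n} where h_n = (c_n x + d_n)^{1/2}, with c_n = 2 − 2b_n^{−2} and d_n = b_n² − 2b_n^{−2}, defined for n large enough that c_n x + d_n > 0. Then as n → ∞, F_n'(x) = Λ(x) e^{−x} ( 1 + b_n^{−4} ( ϖ + b_n^{−2} τ + O(b_n^{−4}) ) ), where ϖ = 1/2 + x + x² − e^{−x}(7/2 + 3x + x²) and τ = e^{−x}(43/3 + 14x + 6x² + (4/3) x³) − (1/3 + 2x + 2x² + (4/3) x³). -/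

import Mathlib

open Real Filter Topology

/-- The standard normal distribution function. -/
noncomputable def stdNormalCDF (x : ℝ) : ℝ :=
  ∫ u in Set.Iic x, Real.exp (-u ^ 2 / 2) / Real.sqrt (2 * Real.pi)

/-- The Gumbel distribution function `Λ(x) = exp(−e^{−x})`. -/
noncomputable def gumbel (x : ℝ) : ℝ := Real.exp (-Real.exp (-x))


open Asymptotics in
/-- Third order expansion of `f` in powers of `e`, with remainder `O(e ^ 4)`. -/
def X4 {α : Type*} (l : Filter α) (e f : α → ℝ) (a0 a1 a2 a3 : ℝ) : Prop :=
  (fun n => f n - (a0 + a1 * e n + a2 * e n ^ 2 + a3 * e n ^ 3)) =O[l] (fun n => e n ^ 4)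

namespace X4

open Asymptotics

variable {α : Type*} {l : Filter α} {e f g : α → ℝ} {a0 a1 a2 a3 c0 c1 c2 c3 : ℝ}

theorem congr_coef (h : X4 l e f a0 a1 a2 a3) (h0 : a0 = c0) (h1 : a1 = c1) (h2 : a2 = c2)
    (h3 : a3 = c3) : X4 l e f c0 c1 c2 c3 := by
  subst h0 h1 h2 h3; exact h

theorem of_isBigO (h : X4 l e f a0 a1 a2 a3)
    (hg : (fun n => g n - f n) =O[l] (fun n => e n ^ 4)) : X4 l e g a0 a1 a2 a3 := by
  have := hg.add h
  refine this.congr_left fun n => ?_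
  ring

theorem congr' (h : X4 l e f a0 a1 a2 a3) (hg : f =ᶠ[l] g) : X4 l e g a0 a1 a2 a3 := by
  refine IsBigO.congr' h ?_ EventuallyEq.rfl
  filter_upwards [hg] with n hn
  rw [hn]

theorem poly (l : Filter α) (e : α → ℝ) (a0 a1 a2 a3 : ℝ) :
    X4 l e (fun n => a0 + a1 * e n + a2 * e n ^ 2 + a3 * e n ^ 3) a0 a1 a2 a3 := by
  unfold X4
  simp only [sub_self]
  exact isBigO_zero _ _

theorem add (hf : X4 l e f a0 a1 a2 a3) (hg : X4 l e g c0 c1 c2 c3) :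
    X4 l e (fun n => f n + g n) (a0 + c0) (a1 + c1) (a2 + c2) (a3 + c3) := by
  refine (IsBigO.add hf hg).congr_left fun n => ?_
  ring

theorem const_mul (k : ℝ) (hf : X4 l e f a0 a1 a2 a3) :
    X4 l e (fun n => k * f n) (k * a0) (k * a1) (k * a2) (k * a3) := by
  refine (IsBigO.const_mul_left hf k).congr_left fun n => ?_
  ring

theorem tendsto (he : Tendsto e l (𝓝 0)) (hf : X4 l e f a0 a1 a2 a3) :
    Tendsto f l (𝓝 a0) := by
  have h1 : Tendsto (fun n => e n ^ 4) l (𝓝 0) := by simpa using he.pow 4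
  have h2 := IsBigO.trans_tendsto hf h1
  have h3 : Tendsto (fun n => a0 + a1 * e n + a2 * e n ^ 2 + a3 * e n ^ 3) l (𝓝 a0) := by
    have : Tendsto (fun y : ℝ => a0 + a1 * y + a2 * y ^ 2 + a3 * y ^ 3) (𝓝 0)
        (𝓝 (a0 + a1 * 0 + a2 * 0 ^ 2 + a3 * 0 ^ 3)) :=
      Continuous.tendsto (by fun_prop) 0
    simp only [ne_eq, OfNat.ofNat_ne_zero, not_false_eq_true, zero_pow, mul_zero, add_zero] at this
    exact this.comp he
  have := h2.add h3
  simpa using this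

theorem mul (he : Tendsto e l (𝓝 0)) (hf : X4 l e f a0 a1 a2 a3) (hg : X4 l e g c0 c1 c2 c3) :
    X4 l e (fun n => f n * g n) (a0 * c0) (a0 * c1 + a1 * c0) (a0 * c2 + a1 * c1 + a2 * c0)
      (a0 * c3 + a1 * c2 + a2 * c1 + a3 * c0) := by
  have hf1 : f =O[l] (fun _ => (1 : ℝ)) := (hf.tendsto he).isBigO_one ℝ
  have hq1 : (fun n => c0 + c1 * e n + c2 * e n ^ 2 + c3 * e n ^ 3) =O[l] (fun _ => (1 : ℝ)) :=
    ((poly l e c0 c1 c2 c3).tendsto he).isBigO_one ℝ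
  have hr1 : (fun n => (a1 * c3 + a2 * c2 + a3 * c1) + (a2 * c3 + a3 * c2) * e n
      + (a3 * c3) * e n ^ 2 + 0 * e n ^ 3) =O[l] (fun _ => (1 : ℝ)) :=
    ((poly l e _ _ _ _).tendsto he).isBigO_one ℝ
  have A := hf1.mul hg
  have B := IsBigO.mul hf hq1
  have C := hr1.mul (isBigO_refl (fun n => e n ^ 4) l)
  simp only [one_mul, mul_one] at A B C
  refine ((A.add B).add C).congr_left fun n => ?_
  ring

theorem isBigO_e (he : Tendsto e l (𝓝 0)) (hf : X4 l e f 0 a1 a2 a3) : f =O[l] e := by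
  have h1 : (fun n => e n ^ 4) =O[l] e := by
    have h : (fun n => e n ^ 3) =O[l] (fun _ => (1 : ℝ)) := (he.pow 3).isBigO_one ℝ
    have := h.mul (isBigO_refl e l)
    simp only [one_mul] at this
    exact this.congr_left fun n => by ring
  have hr1 : (fun n => a1 + a2 * e n + a3 * e n ^ 2 + 0 * e n ^ 3) =O[l] (fun _ => (1 : ℝ)) :=
    ((poly l e _ _ _ _).tendsto he).isBigO_one ℝ
  have B := hr1.mul (isBigO_refl e l)
  simp only [one_mul] at B
  refine ((IsBigO.trans hf h1).add B).congr_left fun n => ?_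
  ring

theorem comp (he : Tendsto e l (𝓝 0)) (hf : X4 l e f 0 a1 a2 a3) (G : ℝ → ℝ)
    (hG : (fun v => G v - (c0 + c1 * v + c2 * v ^ 2 + c3 * v ^ 3)) =O[𝓝 0] (fun v => v ^ 4)) :
    X4 l e (fun n => G (f n)) c0 (c1 * a1) (c1 * a2 + c2 * a1 ^ 2)
      (c1 * a3 + c2 * (2 * a1 * a2) + c3 * a1 ^ 3) := by
  have h2 := hf.mul he hf
  have h3 := h2.mul he hf
  have h := (((poly l e c0 0 0 0).add (hf.const_mul c1)).add (h2.const_mul c2)).add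
    (h3.const_mul c3)
  have h4 := (hG.comp_tendsto (hf.tendsto he)).trans ((hf.isBigO_e he).pow 4)
  refine (h.of_isBigO (g := fun n => G (f n)) ?_).congr_coef ?_ ?_ ?_ ?_
  · refine h4.congr_left fun n => ?_
    simp only [Function.comp]
    ring
  all_goals ring

theorem exp (he : Tendsto e l (𝓝 0)) (hf : X4 l e f 0 a1 a2 a3) :
    X4 l e (fun n => Real.exp (f n)) 1 a1 (a2 + a1 ^ 2 / 2) (a3 + a1 * a2 + a1 ^ 3 / 6) := by
  refine (hf.comp he (c0 := 1) (c1 := 1) (c2 := 1 / 2) (c3 := 1 / 6) Real.exp ?_).congr_coef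
    ?_ ?_ ?_ ?_
  · refine IsBigO.of_bound 1 ?_
    filter_upwards [Metric.ball_mem_nhds (0 : ℝ) one_pos] with v hv
    have hv1 : |v| ≤ 1 := by
      have := Metric.mem_ball.1 hv
      rw [Real.dist_eq, sub_zero] at this
      exact this.le
    have := Real.exp_bound hv1 (n := 4) (by norm_num)
    simp only [Finset.sum_range_succ, Finset.sum_range_zero] at this
    norm_num [Nat.factorial] at this
    rw [Real.norm_eq_abs, Real.norm_eq_abs, abs_pow]
    have h4 : (0 : ℝ) ≤ |v| ^ 4 := by positivity
    calc _ = |Real.exp v - (1 + v + v ^ 2 / 2 + v ^ 3 / 6)| := by congr 1; ring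
      _ ≤ _ := this
      _ ≤ _ := by linarith
  all_goals ring

theorem log1p (he : Tendsto e l (𝓝 0)) (hf : X4 l e f 0 a1 a2 a3) :
    X4 l e (fun n => Real.log (1 + f n)) 0 a1 (a2 - a1 ^ 2 / 2) (a3 - a1 * a2 + a1 ^ 3 / 3) := by
  refine (hf.comp he (c0 := 0) (c1 := 1) (c2 := -1 / 2) (c3 := 1 / 3)
    (fun v => Real.log (1 + v)) ?_).congr_coef ?_ ?_ ?_ ?_
  · refine IsBigO.of_bound 4 ?_
    filter_upwards [Metric.ball_mem_nhds (0 : ℝ) (show (0 : ℝ) < 1 / 2 by norm_num)] with v hv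
    have hv1 : |v| < 1 / 2 := by
      have := Metric.mem_ball.1 hv
      rwa [Real.dist_eq, sub_zero] at this
    have := Real.abs_log_sub_add_sum_range_le (x := -v) (by rw [abs_neg]; linarith) 3
    simp only [Finset.sum_range_succ, Finset.sum_range_zero] at this
    norm_num at this
    rw [Real.norm_eq_abs, Real.norm_eq_abs, abs_pow]
    have h4 : (0 : ℝ) ≤ |v| ^ 4 := by positivity
    calc _ = |-v + v ^ 2 / 2 + (-v) ^ 3 / 3 + Real.log (1 + v)| := by congr 1; ring
      _ ≤ _ := this
      _ ≤ 4 * |v| ^ 4 := by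
        rw [div_le_iff₀ (by linarith)]
        nlinarith
  all_goals ring

end X4

/-- The standard normal density. -/
noncomputable def nphi (x : ℝ) : ℝ := Real.exp (-x ^ 2 / 2) / Real.sqrt (2 * Real.pi)

theorem nphi_eq_gauss : nphi = ProbabilityTheory.gaussianPDFReal 0 1 := by
  funext x
  simp [nphi, ProbabilityTheory.gaussianPDFReal]
  ring_nf

theorem nphi_integrable : MeasureTheory.Integrable nphi := by
  rw [nphi_eq_gauss]; exact ProbabilityTheory.integrable_gaussianPDFReal 0 1

theorem nphi_integral : ∫ x, nphi x = 1 := by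
  rw [nphi_eq_gauss]; exact ProbabilityTheory.integral_gaussianPDFReal_eq_one 0 (by norm_num)

theorem nphi_pos (x : ℝ) : 0 < nphi x := by unfold nphi; positivity

theorem nphi_continuous : Continuous nphi := by unfold nphi; fun_prop

theorem stdNormalCDF_eq (x : ℝ) : stdNormalCDF x = ∫ u in Set.Iic x, nphi u := rfl

theorem stdNormalCDF_hasDerivAt (x : ℝ) : HasDerivAt stdNormalCDF (nphi x) x := by
  have h : stdNormalCDF = fun y => (∫ u in (0 : ℝ)..y, nphi u) + stdNormalCDF 0 := by
    funext y
    rw [← intervalIntegral.integral_Iic_sub_Iic nphi_integrable.integrableOn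
      nphi_integrable.integrableOn, stdNormalCDF_eq, stdNormalCDF_eq]
    ring
  rw [h]
  exact (nphi_continuous.integral_hasStrictDerivAt 0 x).hasDerivAt.add_const _

theorem stdNormalCDF_tendsto : Tendsto stdNormalCDF atTop (𝓝 1) := by
  have := MeasureTheory.tendsto_setIntegral_of_monotone (μ := MeasureTheory.volume)
    (s := fun x : ℝ => Set.Iic x) (f := nphi) (fun x => measurableSet_Iic)
    (fun a b h => Set.Iic_subset_Iic.2 h) nphi_integrable.integrableOn
  rw [Set.iUnion_Iic, MeasureTheory.setIntegral_univ, nphi_integral] at this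
  exact this

theorem nphi_hasDerivAt (x : ℝ) : HasDerivAt nphi (-x * nphi x) x := by
  have h : HasDerivAt (fun x : ℝ => -x ^ 2 / 2) (-x) x := by
    have := ((hasDerivAt_pow 2 x).neg).div_const 2
    refine this.congr_deriv ?_
    norm_num
    ring
  have := (h.exp).div_const (Real.sqrt (2 * Real.pi))
  refine this.congr_deriv ?_
  unfold nphi
  ring

theorem nphi_tendsto : Tendsto nphi atTop (𝓝 0) := by
  have h : Tendsto (fun x : ℝ => -x ^ 2 / 2) atTop atBot := by
    have h2 : Tendsto (fun x : ℝ => x ^ 2 / 2) atTop atTop :=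
      (tendsto_pow_atTop (by norm_num)).atTop_div_const (by norm_num)
    have := tendsto_neg_atTop_atBot.comp h2
    refine this.congr fun x => ?_
    simp only [Function.comp]; ring
  have := (Real.tendsto_exp_atBot.comp h).div_const (Real.sqrt (2 * Real.pi))
  rw [zero_div] at this
  exact this

/-- Truncations of the Mills ratio expansion, times the density. -/
noncomputable def mills (k : ℝ) (h : ℝ) : ℝ :=
  nphi h * (h⁻¹ - h⁻¹ ^ 3 + 3 * h⁻¹ ^ 5 - 15 * h⁻¹ ^ 7 + k * h⁻¹ ^ 9)

theorem mills_tendsto (k : ℝ) : Tendsto (mills k) atTop (𝓝 0) := by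
  have h : Tendsto (fun y : ℝ => y - y ^ 3 + 3 * y ^ 5 - 15 * y ^ 7 + k * y ^ 9) (𝓝 0)
      (𝓝 (0 - 0 ^ 3 + 3 * 0 ^ 5 - 15 * 0 ^ 7 + k * 0 ^ 9)) :=
    Continuous.tendsto (by fun_prop) 0
  have := nphi_tendsto.mul (h.comp tendsto_inv_atTop_zero)
  rw [zero_mul] at this
  exact this

theorem mills_hasDerivAt (k : ℝ) {h : ℝ} (hh : 0 < h) :
    HasDerivAt (mills k) (-nphi h * (1 + (k - 105) * h⁻¹ ^ 8 + 9 * k * h⁻¹ ^ 10)) h := by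
  have hi : HasDerivAt (fun y : ℝ => y⁻¹) (-(h ^ 2)⁻¹) h := hasDerivAt_inv hh.ne'
  have hp := ((((hi.sub (hi.pow 3)).add ((hi.pow 5).const_mul 3)).sub
    ((hi.pow 7).const_mul 15)).add ((hi.pow 9).const_mul k))
  have := (nphi_hasDerivAt h).mul hp
  refine this.congr_deriv ?_
  simp
  field_simp
  ring

theorem nonneg_of_deriv {f f' : ℝ → ℝ} (hf : ∀ y, 0 < y → HasDerivAt f (f' y) y)
    (hf' : ∀ y, 0 < y → f' y ≤ 0) (hl : Tendsto f atTop (𝓝 0)) {h : ℝ} (hh : 0 < h) :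
    0 ≤ f h := by
  have hA : AntitoneOn f (Set.Ioi 0) := by
    refine antitoneOn_of_deriv_nonpos (convex_Ioi 0)
      (fun y hy => (hf y hy).continuousAt.continuousWithinAt) ?_ ?_
    · rw [interior_Ioi]
      exact fun y hy => (hf y hy).differentiableAt.differentiableWithinAt
    · rw [interior_Ioi]
      intro y hy
      rw [(hf y hy).deriv]
      exact hf' y hy
  refine le_of_tendsto hl ?_
  filter_upwards [eventually_ge_atTop h] with y hy
  exact hA hh (lt_of_lt_of_le hh hy : 0 < y) hy

theorem mills_lower {h : ℝ} (hh : 0 < h) : mills 0 h ≤ 1 - stdNormalCDF h := by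
  have := nonneg_of_deriv (f := fun y => (1 - stdNormalCDF y) - mills 0 y)
    (f' := fun y => -nphi y - (-nphi y * (1 + (0 - 105) * y⁻¹ ^ 8 + 9 * 0 * y⁻¹ ^ 10)))
    (fun y hy => ((stdNormalCDF_hasDerivAt y).const_sub 1).sub (mills_hasDerivAt 0 hy))
    (fun y hy => by
      have := mul_pos (nphi_pos y) (pow_pos (inv_pos.2 hy) 8)
      nlinarith)
    (by simpa using (stdNormalCDF_tendsto.const_sub 1).sub (mills_tendsto 0)) hh
  simpa using this

theorem mills_upper {h : ℝ} (hh : 0 < h) : 1 - stdNormalCDF h ≤ mills 105 h := by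
  have := nonneg_of_deriv (f := fun y => mills 105 y - (1 - stdNormalCDF y))
    (f' := fun y => (-nphi y * (1 + (105 - 105) * y⁻¹ ^ 8 + 9 * 105 * y⁻¹ ^ 10)) - -nphi y)
    (fun y hy => (mills_hasDerivAt 105 hy).sub ((stdNormalCDF_hasDerivAt y).const_sub 1))
    (fun y hy => by
      have := mul_pos (nphi_pos y) (pow_pos (inv_pos.2 hy) 10)
      nlinarith)
    (by simpa using (mills_tendsto 105).sub (stdNormalCDF_tendsto.const_sub 1)) hh
  simpa using this

theorem density_deriv (c d x : ℝ) (n : ℕ) (hs : 0 < c * x + d) :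
    deriv (fun y : ℝ =>
          stdNormalCDF ((c * y + d) ^ ((1 : ℝ) / 2)) ^ n -
            (1 - stdNormalCDF ((c * y + d) ^ ((1 : ℝ) / 2))) ^ n) x =
      (n * nphi (√(c * x + d)) * (√(c * x + d))⁻¹) * (c / 2) *
        (stdNormalCDF (√(c * x + d)) ^ (n - 1) + (1 - stdNormalCDF (√(c * x + d))) ^ (n - 1)) := by
  simp only [← Real.sqrt_eq_rpow]
  have h1 : HasDerivAt (fun y : ℝ => c * y + d) c x := by
    simpa using ((hasDerivAt_id x).const_mul c).add_const d
  have h2 := h1.sqrt hs.ne'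
  have h3 : HasDerivAt (fun y => stdNormalCDF (√(c * y + d)))
      (nphi (√(c * x + d)) * (c / (2 * √(c * x + d)))) x :=
    HasDerivAt.comp x (stdNormalCDF_hasDerivAt _) h2
  have h4 := (h3.pow n).sub ((h3.const_sub 1).pow n)
  refine (h4.deriv).trans ?_
  have : √(c * x + d) ≠ 0 := (Real.sqrt_pos.2 hs).ne'
  field_simp
  ring

theorem phi_identity (n : ℕ) (b x L s e : ℝ) (hb : 0 < b)
    (hn : 2 * Real.pi * b ^ 2 * Real.exp (b ^ 2) = (n : ℝ) ^ 2)
    (hs : s = b ^ 2 + 2 * x - 2 * (1 + x) * e)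
    (hL : s = b ^ 2 * Real.exp L) :
    n * nphi (√s) * (√s)⁻¹ = Real.exp (-x) * Real.exp (e * (1 + x) - L / 2) := by
  have hs0 : 0 < s := by rw [hL]; positivity
  have h1 : (n : ℝ) = √(2 * Real.pi) * b * Real.exp (b ^ 2 / 2) := by
    refine (pow_left_inj₀ (by positivity) (by positivity) two_ne_zero).1 ?_
    rw [← hn, mul_pow, mul_pow, Real.sq_sqrt (by positivity), ← Real.exp_nat_mul]
    congr 2
    push_cast; ring
  have h2 : √s = b * Real.exp (L / 2) := by
    rw [hL, Real.sqrt_mul (by positivity), Real.sqrt_sq hb.le, Real.exp_half]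
  have h3 : nphi (√s) = Real.exp (-s / 2) / √(2 * Real.pi) := by
    unfold nphi; rw [Real.sq_sqrt hs0.le]
  have hp : √(2 * Real.pi) ≠ 0 := by positivity
  rw [h3, h2, h1, mul_inv, ← Real.exp_neg]
  calc _ = Real.exp (b ^ 2 / 2) * Real.exp (-s / 2) * Real.exp (-(L / 2)) := by
        field_simp
    _ = _ := by
        rw [← Real.exp_add, ← Real.exp_add, ← Real.exp_add]
        congr 1
        rw [hs]; ring

open Asymptotics in
theorem b_facts (b : ℕ → ℝ)
    (hb : ∀ n : ℕ, 1 ≤ n → 0 < b n ∧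
      2 * Real.pi * (b n) ^ 2 * Real.exp ((b n) ^ 2) = (n : ℝ) ^ 2) :
    Tendsto (fun n => ((b n) ^ 2)⁻¹) atTop (𝓝 0) ∧
    (fun n : ℕ => ((n : ℝ))⁻¹) =O[atTop] (fun n => (((b n) ^ 2)⁻¹) ^ 4) := by
  constructor
  · have h : Tendsto (fun n => b n ^ 2) atTop atTop := by
      have h1 : Tendsto (fun n : ℕ => Real.log ((n : ℝ) / (2 * Real.pi))) atTop atTop :=
        Real.tendsto_log_atTop.comp
          (tendsto_natCast_atTop_atTop.atTop_div_const (by positivity))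
      refine tendsto_atTop_mono' _ ?_ (h1.atTop_div_const (show (0 : ℝ) < 2 by norm_num))
      filter_upwards [eventually_ge_atTop 1] with n hn
      obtain ⟨hb0, hbn⟩ := hb n hn
      have hn1 : (1 : ℝ) ≤ n := by exact_mod_cast hn
      rw [div_le_iff₀ (by norm_num), Real.log_le_iff_le_exp (by positivity),
        div_le_iff₀ (by positivity)]
      have h2 : b n ^ 2 ≤ Real.exp (b n ^ 2) := by linarith [Real.add_one_le_exp (b n ^ 2)]
      have h3 : (n : ℝ) ≤ n ^ 2 := by nlinarith
      calc (n : ℝ) ≤ n ^ 2 := h3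
        _ = 2 * Real.pi * (b n) ^ 2 * Real.exp ((b n) ^ 2) := hbn.symm
        _ ≤ 2 * Real.pi * Real.exp (b n ^ 2) * Real.exp ((b n) ^ 2) := by gcongr
        _ = _ := by
          rw [mul_assoc, ← Real.exp_add]; ring_nf
    exact tendsto_inv_atTop_zero.comp h
  · refine IsBigO.of_bound ((Nat.factorial 7 : ℝ)) ?_
    filter_upwards [eventually_ge_atTop 1] with n hn
    obtain ⟨hb0, hbn⟩ := hb n hn
    have hn1 : (1 : ℝ) ≤ n := by exact_mod_cast hn
    have h2 := Real.pow_div_factorial_le_exp (b n ^ 2) (by positivity) 7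
    have hp : (1 : ℝ) ≤ 2 * Real.pi := by linarith [Real.pi_gt_three]
    have h3 : (b n ^ 2) ^ 8 / (Nat.factorial 7 : ℝ) ≤ n ^ 2 := by
      calc (b n ^ 2) ^ 8 / (Nat.factorial 7 : ℝ)
          = 1 * b n ^ 2 * ((b n ^ 2) ^ 7 / (Nat.factorial 7 : ℝ)) := by ring
        _ ≤ 2 * Real.pi * b n ^ 2 * Real.exp (b n ^ 2) := by gcongr
        _ = _ := hbn
    have hf : (1 : ℝ) ≤ (Nat.factorial 7 : ℝ) := by norm_num [Nat.factorial]
    rw [div_le_iff₀ (by positivity)] at h3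
    have h4 : (b n ^ 2) ^ 4 ≤ (Nat.factorial 7 : ℝ) * n := by
      refine (pow_le_pow_iff_left₀ (by positivity) (by positivity) two_ne_zero).1 ?_
      calc ((b n ^ 2) ^ 4) ^ 2 = (b n ^ 2) ^ 8 := by ring
        _ ≤ n ^ 2 * (Nat.factorial 7 : ℝ) := h3
        _ ≤ n ^ 2 * (Nat.factorial 7 : ℝ) ^ 2 := by
          gcongr
          nlinarith
        _ = _ := by ring
    rw [Real.norm_of_nonneg (by positivity), Real.norm_of_nonneg (by positivity), inv_pow,
      inv_le_comm₀ (by positivity) (by positivity), mul_inv, inv_inv]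
    rw [inv_mul_le_iff₀ (by positivity)]
    exact h4

open Asymptotics in
/-- `(1 - T/n)^(n-1) + (T/n)^(n-1)` versus `exp (-T)`, for bounded nonnegative `T`. -/
theorem pow_asymp (T : ℕ → ℝ) (t : ℝ) (hT : Tendsto T atTop (𝓝 t))
    (hT0 : ∀ᶠ n in atTop, 0 ≤ T n) :
    ∃ D : ℕ → ℝ, D =O[atTop] (fun n : ℕ => ((n : ℝ))⁻¹) ∧
      ∃ R : ℕ → ℝ, R =O[atTop] (fun n : ℕ => ((n : ℝ))⁻¹) ∧
      ∀ᶠ n : ℕ in atTop, (1 - T n / n) ^ (n - 1) + (T n / n) ^ (n - 1) =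
        Real.exp (-T n + D n) + R n := by
  have hT1 : T =O[atTop] (fun _ => (1 : ℝ)) := hT.isBigO_one ℝ
  have hn0 : Tendsto (fun n : ℕ => ((n : ℝ))⁻¹) atTop (𝓝 0) := tendsto_inv_atTop_nhds_zero_nat
  have hv : Tendsto (fun n : ℕ => T n / n) atTop (𝓝 0) := by
    simpa [div_eq_mul_inv] using hT.mul hn0
  have hvO : (fun n : ℕ => T n / n) =O[atTop] (fun n : ℕ => ((n : ℝ))⁻¹) := by
    simpa [div_eq_mul_inv] using hT1.mul (isBigO_refl (fun n : ℕ => ((n : ℝ))⁻¹) atTop)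
  have hsmall : ∀ᶠ n : ℕ in atTop, T n / n < 1 / 2 := hv.eventually_lt_const (by norm_num)
  refine ⟨fun n => ((n : ℝ) - 1) * Real.log (1 - T n / n) + T n, ?_,
    fun n => (T n / n) ^ (n - 1), ?_, ?_⟩
  · have hO : (fun n : ℕ => T n ^ 2 * ((n : ℝ))⁻¹ + T n * ((n : ℝ))⁻¹)
        =O[atTop] (fun n : ℕ => ((n : ℝ))⁻¹) := by
      have hT2 := hT1.pow 2
      simp only [one_pow] at hT2
      have A := hT2.mul (isBigO_refl (fun n : ℕ => ((n : ℝ))⁻¹) atTop)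
      have B := hT1.mul (isBigO_refl (fun n : ℕ => ((n : ℝ))⁻¹) atTop)
      simp only [one_mul] at A B
      exact A.add B
    refine IsBigO.trans (IsBigO.of_bound 2 ?_) hO
    filter_upwards [hsmall, hT0, eventually_ge_atTop 1] with n h1 h2 hn
    have hn1 : (1 : ℝ) ≤ n := by exact_mod_cast hn
    set v := T n / n with hvdef
    have hv0 : 0 ≤ v := by positivity
    have hTv : T n = n * v := by rw [hvdef]; field_simp
    have hl := Real.abs_log_sub_add_sum_range_le (x := v) (by rw [abs_of_nonneg hv0]; linarith) 1
    simp only [Finset.sum_range_succ, Finset.sum_range_zero] at hl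
    norm_num at hl
    have hl2 : |v + Real.log (1 - v)| ≤ 2 * v ^ 2 := by
      refine hl.trans ?_
      rw [abs_of_nonneg hv0, div_le_iff₀ (by linarith)]
      nlinarith [sq_nonneg v]
    have e1 : ((n : ℝ) - 1) * Real.log (1 - v) + T n
        = ((n : ℝ) - 1) * (v + Real.log (1 - v)) + v := by rw [hTv]; ring
    have e2 : T n ^ 2 * ((n : ℝ))⁻¹ + T n * ((n : ℝ))⁻¹ = n * v ^ 2 + v := by
      rw [hTv]; field_simp
    rw [e1, e2, Real.norm_eq_abs, Real.norm_of_nonneg (by positivity)]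
    calc _ ≤ |((n : ℝ) - 1) * (v + Real.log (1 - v))| + |v| := abs_add_le _ _
      _ = ((n : ℝ) - 1) * |v + Real.log (1 - v)| + v := by
        rw [abs_mul, abs_of_nonneg (by linarith : (0 : ℝ) ≤ (n : ℝ) - 1), abs_of_nonneg hv0]
      _ ≤ n * (2 * v ^ 2) + v := by gcongr; linarith
      _ ≤ _ := by linarith
  · refine IsBigO.trans (IsBigO.of_bound 1 ?_) hvO
    filter_upwards [hsmall, hT0, eventually_ge_atTop 2] with n h1 h2 hn
    have hv0 : 0 ≤ T n / n := by positivity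
    rw [Real.norm_of_nonneg (by positivity), Real.norm_of_nonneg hv0, one_mul]
    exact pow_le_of_le_one hv0 (by linarith) (by omega)
  · filter_upwards [hsmall, eventually_ge_atTop 1] with n h1 hn
    congr 1
    have hp : 0 < 1 - T n / n := by linarith
    have : -T n + (((n : ℝ) - 1) * Real.log (1 - T n / n) + T n)
        = ((n - 1 : ℕ) : ℝ) * Real.log (1 - T n / n) := by
      rw [Nat.cast_sub hn]; push_cast; ring
    rw [this, Real.exp_nat_mul, Real.exp_log hp]

/-- Theorem 2.2, `t = 2`: With `b_n` the unique positive solution of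
`2π b_n² exp(b_n²) = n²`, `c_n = 2 − 2b_n^{−2}`, `d_n = b_n² − 2b_n^{−2}` and
`F_n(y) = Φ((c_n y + d_n)^{1/2})^n − (1 − Φ((c_n y + d_n)^{1/2}))^n`:
`F_n'(x) = Λ(x) e^{−x}(1 + b_n^{−4}(ϖ + b_n^{−2} τ + O(b_n^{−4})))`, where
`ϖ = 1/2 + x + x² − e^{−x}(7/2 + 3x + x²)` and
`τ = e^{−x}(43/3 + 14x + 6x² + (4/3)x³) − (1/3 + 2x + 2x² + (4/3)x³)`. -/
theorem powered_extremes_density_higher_order_expansion_t_eq_two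
    (b : ℕ → ℝ)
    (hb : ∀ n : ℕ, 1 ≤ n → 0 < b n ∧
      2 * Real.pi * (b n) ^ 2 * Real.exp ((b n) ^ 2) = (n : ℝ) ^ 2)
    (x : ℝ)
    (c d : ℕ → ℝ)
    (hc : ∀ n : ℕ, c n = 2 - 2 / (b n) ^ 2)
    (hd : ∀ n : ℕ, d n = (b n) ^ 2 - 2 / (b n) ^ 2) :
    ∃ C > (0 : ℝ), ∃ N : ℕ, ∀ n : ℕ, N ≤ n →
      0 < c n * x + d n ∧
      |deriv (fun y : ℝ =>
          stdNormalCDF ((c n * y + d n) ^ ((1 : ℝ) / 2)) ^ n -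
            (1 - stdNormalCDF ((c n * y + d n) ^ ((1 : ℝ) / 2))) ^ n) x -
        gumbel x * Real.exp (-x) *
          (1 + (1 / 2 + x + x ^ 2 -
              Real.exp (-x) * (7 / 2 + 3 * x + x ^ 2)) / (b n) ^ 4 +
            (Real.exp (-x) * (43 / 3 + 14 * x + 6 * x ^ 2 + 4 / 3 * x ^ 3) -
              (1 / 3 + 2 * x + 2 * x ^ 2 + 4 / 3 * x ^ 3)) / (b n) ^ 6)|
      ≤ C / (b n) ^ 8 := by
  obtain ⟨he, hnO⟩ := b_facts b hb
  set e : ℕ → ℝ := fun n => ((b n) ^ 2)⁻¹ with hedef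
  set E : ℝ := Real.exp (-x) with hE
  have hEpos : 0 < E := Real.exp_pos _
  -- the expansions
  have hX : X4 atTop e (fun n => 0 + 1 * e n + 0 * e n ^ 2 + 0 * e n ^ 3) 0 1 0 0 := X4.poly _ _ _ _ _ _
  have hu : X4 atTop e (fun n => 0 + 2 * x * e n + (-2 * (1 + x)) * e n ^ 2 + 0 * e n ^ 3)
    0 (2 * x) (-2 * (1 + x)) 0 := X4.poly _ _ _ _ _ _
  set u : ℕ → ℝ := fun n => 0 + 2 * x * e n + (-2 * (1 + x)) * e n ^ 2 + 0 * e n ^ 3 with hudef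
  have hL := hu.log1p he
  set L : ℕ → ℝ := fun n => Real.log (1 + u n) with hLdef
  have hbase := ((hX.const_mul (1 + x)).add (hL.const_mul (-1 / 2)))
  set base : ℕ → ℝ := fun n => (1 + x) * (0 + 1 * e n + 0 * e n ^ 2 + 0 * e n ^ 3) +
    (-1 / 2) * L n with hbasedef
  have hbase' := (hbase.congr_coef (c0 := 0) (by ring) rfl rfl rfl).exp he
  have hr := hX.mul he (((hL.const_mul (-1)).congr_coef (c0 := 0) (by ring) rfl rfl rfl).exp he)
  set r : ℕ → ℝ := fun n => (0 + 1 * e n + 0 * e n ^ 2 + 0 * e n ^ 3) *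
    Real.exp (-1 * L n) with hrdef
  have hr2 := hr.mul he hr
  have hr3 := hr2.mul he hr
  have hM := (((X4.poly atTop e 1 0 0 0).add (hr.const_mul (-1))).add (hr2.const_mul 3)).add
    (hr3.const_mul (-15))
  have hTm := ((hbase'.mul he hM).const_mul E).congr_coef (c0 := E) (c1 := 0)
    (c2 := E * (7 / 2 + 3 * x + x ^ 2))
    (c3 := -(E * (43 / 3 + 14 * x + 6 * x ^ 2 + 4 / 3 * x ^ 3)))
    (by ring) (by ring) (by ring) (by ring)
  set Tm : ℕ → ℝ := fun n => E * (Real.exp (base n) * (1 + 0 * e n + 0 * e n ^ 2 + 0 * e n ^ 3 +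
    -1 * r n + 3 * (r n * r n) + -15 * (r n * r n * r n))) with hTmdef
  set s : ℕ → ℝ := fun n => c n * x + d n with hsdef
  set T : ℕ → ℝ := fun n => n * (1 - stdNormalCDF (√(s n))) with hTdef
  have hutend : Tendsto u atTop (𝓝 0) := hu.tendsto he
  have hupos : ∀ᶠ n in atTop, 0 < 1 + u n := by
    filter_upwards [hutend.eventually_const_lt (show (-1 : ℝ) < 0 by norm_num)] with n hn
    linarith
  have hsform : ∀ n, 1 ≤ n → s n = b n ^ 2 + 2 * x - 2 * (1 + x) * e n := by
    intro n hn
    have hb0 := (hb n hn).1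
    simp only [hsdef, hc, hd, hedef]
    field_simp
    ring
  have hsL : ∀ᶠ n in atTop, s n = b n ^ 2 * Real.exp (L n) := by
    filter_upwards [hupos, eventually_ge_atTop 1] with n hn hn1
    have hb0 := (hb n hn1).1
    rw [hsform n hn1]
    simp only [hLdef]
    rw [Real.exp_log hn]
    simp only [hudef, hedef]
    field_simp
    ring
  have hspos : ∀ᶠ n in atTop, 0 < s n := by
    filter_upwards [hsL, eventually_ge_atTop 1] with n hn hn1
    have hb0 := (hb n hn1).1
    rw [hn]; positivity
  have hphi : ∀ᶠ n : ℕ in atTop, n * nphi (√(s n)) * (√(s n))⁻¹ = E * Real.exp (base n) := by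
    filter_upwards [hsL, eventually_ge_atTop 1] with n hn hn1
    rw [phi_identity n (b n) x (L n) (s n) (e n) (hb n hn1).1 (hb n hn1).2 (hsform n hn1) hn, hE]
    congr 2
    simp only [hbasedef]; ring
  have hrs : ∀ᶠ n in atTop, (√(s n))⁻¹ ^ 2 = r n := by
    filter_upwards [hspos, hsL, eventually_ge_atTop 1] with n hn0 hn hn1
    rw [inv_pow, Real.sq_sqrt hn0.le, hn, mul_inv, ← Real.exp_neg]
    simp only [hrdef, hedef]; ring_nf
  have hmills : ∀ k : ℝ, ∀ᶠ n : ℕ in atTop, n * mills k (√(s n)) =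
      Tm n + k * (E * Real.exp (base n) * r n ^ 4) := by
    intro k
    filter_upwards [hphi, hrs] with n h1 h2
    have : n * mills k (√(s n)) = (n * nphi (√(s n)) * (√(s n))⁻¹) *
        (1 - ((√(s n))⁻¹ ^ 2) + 3 * ((√(s n))⁻¹ ^ 2) ^ 2 - 15 * ((√(s n))⁻¹ ^ 2) ^ 3
          + k * ((√(s n))⁻¹ ^ 2) ^ 4) := by
      unfold mills; ring
    rw [this, h1, h2]
    simp only [hTmdef]; ring
  have hTO : (fun n => T n - Tm n) =O[atTop] (fun n => e n ^ 4) := by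
    have hO : (fun n => Real.exp (base n) * r n ^ 4) =O[atTop] (fun n => e n ^ 4) := by
      have h1 : (fun n => Real.exp (base n)) =O[atTop] (fun _ => (1 : ℝ)) :=
        (hbase'.tendsto he).isBigO_one ℝ
      have h2 := ((hr.congr_coef (c0 := 0) (by ring) rfl rfl rfl).isBigO_e he).pow 4
      simpa using h1.mul h2
    refine Asymptotics.IsBigO.trans (Asymptotics.IsBigO.of_bound (105 * E) ?_) hO
    filter_upwards [hmills 0, hmills 105, hspos] with n h0 h1 hs
    have hl := mul_le_mul_of_nonneg_left (mills_lower (Real.sqrt_pos.2 hs)) (Nat.cast_nonneg (α := ℝ) n)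
    have hup := mul_le_mul_of_nonneg_left (mills_upper (Real.sqrt_pos.2 hs)) (Nat.cast_nonneg (α := ℝ) n)
    rw [h0] at hl
    rw [h1] at hup
    have hl' : Tm n + 0 * (E * Real.exp (base n) * r n ^ 4) ≤ T n := hl
    have hup' : T n ≤ Tm n + 105 * (E * Real.exp (base n) * r n ^ 4) := hup
    rw [Real.norm_of_nonneg (by linarith), Real.norm_of_nonneg (by positivity)]
    linarith
  have hT := hTm.of_isBigO hTO
  have hTt : Tendsto T atTop (𝓝 E) := hT.tendsto he
  obtain ⟨D, hD, R, hR, hDR⟩ := pow_asymp T E hTt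
    ((hTt.eventually_const_lt hEpos).mono fun n hn => hn.le)
  have hw := (((hT.const_mul (-1)).add (X4.poly atTop e E 0 0 0)).of_isBigO
    (g := fun n => (-1 * T n + (E + 0 * e n + 0 * e n ^ 2 + 0 * e n ^ 3)) + D n)
    ((hD.trans hnO).congr_left fun n => by ring)).congr_coef (c0 := 0) (by ring) rfl rfl rfl
  have hP := ((hw.exp he).const_mul (Real.exp (-E))).of_isBigO
    (g := fun n => Real.exp (-T n + D n) + R n)
    ((hR.trans hnO).congr_left fun n => by
      rw [← Real.exp_add]
      have : -E + (-1 * T n + (E + 0 * e n + 0 * e n ^ 2 + 0 * e n ^ 3) + D n) = -T n + D n := by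
        ring
      rw [this]; ring)
  have hc1 : X4 atTop e (fun n => 1 + (-1) * e n + 0 * e n ^ 2 + 0 * e n ^ 3) 1 (-1) 0 0 :=
    X4.poly _ _ _ _ _ _
  have hfin := ((((hbase'.const_mul E).mul he hc1).mul he hP).congr_coef
    (c0 := Real.exp (-E) * E) (c1 := 0)
    (c2 := Real.exp (-E) * E * (1 / 2 + x + x ^ 2 - E * (7 / 2 + 3 * x + x ^ 2)))
    (c3 := Real.exp (-E) * E * (E * (43 / 3 + 14 * x + 6 * x ^ 2 + 4 / 3 * x ^ 3) -
              (1 / 3 + 2 * x + 2 * x ^ 2 + 4 / 3 * x ^ 3)))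
    (by ring) (by ring) (by ring) (by ring))
  obtain ⟨C, hC, hCb⟩ := Asymptotics.IsBigO.exists_pos hfin
  have hev := hCb.bound
  refine ⟨C, hC, ?_⟩
  rw [← eventually_atTop (p := fun n => 0 < c n * x + d n ∧ _)]
  filter_upwards [hev, hspos, hphi, hDR, eventually_ge_atTop 1] with n h1 h2 h3 h4 h5
  refine ⟨h2, ?_⟩
  have hb0 := (hb n h5).1
  have hn0 : (n : ℝ) ≠ 0 := by positivity
  rw [density_deriv _ _ _ _ h2]
  have h2' : c n * x + d n = s n := rfl
  have hTn : T n / n = 1 - stdNormalCDF (√(s n)) := by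
    simp only [hTdef]; field_simp
  rw [hTn, sub_sub_cancel] at h4
  rw [h2', h3, h4, hc]
  have he4 : ‖e n ^ 4‖ = 1 / b n ^ 8 := by
    rw [Real.norm_of_nonneg (by positivity)]
    simp only [hedef]; field_simp
  rw [he4, Real.norm_eq_abs] at h1
  have hg : gumbel x = Real.exp (-E) := rfl
  rw [hg]
  calc _ = _ := by
        congr 1
        simp only [hedef]
        field_simp
        ring
    _ ≤ _ := h1
    _ = _ := by ring
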